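/- For every complex number q with 0 < |q| < 1, the bilateral series identity ∑_{n=−∞}^{∞} (1 + q^{3n+1})·q^{3n+1}/(1 − q^{3n+1})³ = q·(q³;q³)_∞⁶ / ((q;q³)_∞³ (q²;q³)_∞³) holds, where both sides converge (every denominator 1 − q^{3n+1} is nonzero since |q^{3n+1}| ≠ 1). -/

import Mathlib

/-- The infinite q-Pochhammer symbol `(a; q)_∞ = ∏_{n=0}^∞ (1 − a qⁿ)`. -/
noncomputable def qPochInf (a q : ℂ) : ℂ := ∏' n : ℕ, (1 - a * q ^ n)

/-!
Put `p = q ^ 3`. In the multiplicative coordinate `z = exp u`, the function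
`P z = ∑ z pⁿ / (1 - z pⁿ) ^ 2`, summed over `n ∈ ℤ`, is the Weierstrass `℘`-function of `ℂˣ / pᶻ`
up to an additive constant, and `θ z = (z; p)_∞ (p / z; p)_∞` is the corresponding `σ`-function up
to trivial factors. Both `P z - P w` and the quotient `θ (z w) θ (z / w) / (θ z ^ 2 θ w ^ 2)`,
suitably normalised, are even and invariant under `z ↦ p z`, with the same leading coefficient at
the double pole `z = 1`. Their difference is therefore holomorphic on the compact quotient, hence
constant, and it vanishes at `z = w`. Differentiating at `z = w` gives the analogue of
`℘' u = -σ (2u) / σ u ^ 4`, namely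
`∑ (1 + w pⁿ) w pⁿ / (1 - w pⁿ) ^ 3 = w (p; p)_∞ ^ 6 θ (w ^ 2) / θ w ^ 4`. At `w = q` the symmetry
`θ (p / z) = θ z` gives `θ (q ^ 2) = θ q`.
-/

open Filter Metric Set Topology

variable {p x z w : ℂ}

/-! ### The q-Pochhammer symbol -/

lemma norm_mul_pow_le (hp : ‖p‖ < 1) (x : ℂ) (n : ℕ) : ‖x * p ^ n‖ ≤ ‖x‖ := by
  rw [norm_mul, norm_pow]
  exact mul_le_of_le_one_right (norm_nonneg x) (pow_le_one₀ (norm_nonneg p) hp.le)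

lemma summable_norm_neg_mul_pow (hp : ‖p‖ < 1) (x : ℂ) :
    Summable fun n : ℕ => ‖-(x * p ^ n)‖ := by
  simpa only [norm_neg, norm_mul, norm_pow] using
    (summable_geometric_of_lt_one (norm_nonneg p) hp).mul_left ‖x‖

lemma ne_one_of_norm_lt_one (hx : ‖x‖ < 1) : x ≠ 1 := by
  rintro rfl
  simp at hx

lemma mul_pow_ne_one (hp : ‖p‖ < 1) (hx : ‖x‖ < 1) (n : ℕ) : x * p ^ n ≠ 1 :=
  ne_one_of_norm_lt_one ((norm_mul_pow_le hp x n).trans_lt hx)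

lemma qPochInf_ne_zero (hp : ‖p‖ < 1) (hx : ‖x‖ < 1) : qPochInf x p ≠ 0 := by
  simp only [qPochInf, sub_eq_add_neg]
  refine tprod_one_add_ne_zero_of_summable (fun n => ?_) (summable_norm_neg_mul_pow hp x)
  rw [← sub_eq_add_neg, sub_ne_zero]
  exact (mul_pow_ne_one hp hx n).symm

lemma qPochInf_eq_one_sub_mul (hp : ‖p‖ < 1) (x : ℂ) :
    qPochInf x p = (1 - x) * qPochInf (p * x) p := by
  have shift (n : ℕ) : 1 - x * p ^ (n + 1) = 1 - p * x * p ^ n := by ring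
  have multipliable : Multipliable fun n : ℕ => 1 - p * x * p ^ n := by
    simpa only [sub_eq_add_neg] using
      multipliable_one_add_of_summable (summable_norm_neg_mul_pow hp (p * x))
  rw [qPochInf, tprod_eq_zero_mul' (by simpa only [shift] using multipliable)]
  simp only [shift, pow_zero, mul_one, qPochInf]

lemma differentiable_qPochInf (hp : ‖p‖ < 1) : Differentiable ℂ fun x => qPochInf x p := by
  intro x
  have locally_uniform : HasProdLocallyUniformlyOn (fun (n : ℕ) z => 1 + -(z * p ^ n))
      (fun z => ∏' n : ℕ, (1 + -(z * p ^ n))) (ball 0 (‖x‖ + 1)) := by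
    refine Summable.hasProdLocallyUniformlyOn_nat_one_add isOpen_ball
      ((summable_geometric_of_lt_one (norm_nonneg p) hp).mul_left (‖x‖ + 1))
      (.of_forall fun n z hz => ?_) (fun n => by fun_prop)
    rw [norm_neg, norm_mul, norm_pow]
    gcongr
    exact (mem_ball_zero_iff.mp hz).le
  have differentiableOn : DifferentiableOn ℂ (fun z => ∏' n : ℕ, (1 + -(z * p ^ n)))
      (ball 0 (‖x‖ + 1)) :=
    locally_uniform.differentiableOn
      (.of_forall fun s => DifferentiableOn.fun_finsetProd fun n _ => by fun_prop) isOpen_ball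
  simpa only [qPochInf, sub_eq_add_neg] using
    differentiableOn.differentiableAt (isOpen_ball.mem_nhds (by simp))

/-! ### The annulus -/

/-- The annulus `‖p‖ < ‖z‖ < ‖p‖⁻¹`. For `0 < ‖p‖ < 1` it meets every orbit of `z ↦ p * z`, and
`1` is the only power of `p` in it. The second inequality is written without division. -/
def symmAnnulus (p : ℂ) : Set ℂ := {z | ‖p‖ < ‖z‖ ∧ ‖p * z‖ < 1}

lemma isOpen_symmAnnulus (p : ℂ) : IsOpen (symmAnnulus p) :=
  (isOpen_lt (by fun_prop) (by fun_prop)).and (isOpen_lt (by fun_prop) (by fun_prop))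

lemma one_mem_symmAnnulus (hp : ‖p‖ < 1) : 1 ∈ symmAnnulus p := by
  simpa [symmAnnulus] using hp

lemma mem_symmAnnulus_pow (hz0 : z ≠ 0) (hz1 : ‖z‖ < 1) {n : ℕ} (hn : 1 < n) :
    z ∈ symmAnnulus (z ^ n) := by
  refine ⟨?_, ?_⟩
  · rw [norm_pow]
    exact pow_lt_self_of_lt_one₀ (norm_pos_iff.mpr hz0) hz1 hn
  · rw [← pow_succ, norm_pow]
    exact pow_lt_one₀ (norm_nonneg z) hz1 n.succ_ne_zero

namespace symmAnnulus

lemma norm_pos (hz : z ∈ symmAnnulus p) : 0 < ‖z‖ := (norm_nonneg p).trans_lt hz.1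

lemma ne_zero (hz : z ∈ symmAnnulus p) : z ≠ 0 := norm_pos_iff.mp (norm_pos hz)

lemma norm_div_lt_one (hz : z ∈ symmAnnulus p) : ‖p / z‖ < 1 := by
  rw [norm_div]
  exact (div_lt_one (norm_pos hz)).mpr hz.1

lemma inv_mem (hz : z ∈ symmAnnulus p) : z⁻¹ ∈ symmAnnulus p := by
  refine ⟨?_, by simpa only [div_eq_mul_inv] using norm_div_lt_one hz⟩
  rw [norm_inv, ← one_div, lt_div_iff₀ (norm_pos hz), ← norm_mul]
  exact hz.2

end symmAnnulus

lemma mul_mem_symmAnnulus (hp0 : p ≠ 0) (hp1 : ‖p‖ < 1) (hz : z ∈ symmAnnulus p)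
    (hz1 : 1 < ‖z‖) : p * z ∈ symmAnnulus p := by
  refine ⟨?_, ?_⟩
  · rw [norm_mul]
    exact lt_mul_of_one_lt_right (norm_pos_iff.mpr hp0) hz1
  · rw [norm_mul]
    exact mul_lt_one_of_nonneg_of_lt_one_left (norm_nonneg p) hp1 hz.2.le

lemma isPreconnected_symmAnnulus (hp0 : p ≠ 0) : IsPreconnected (symmAnnulus p) := by
  have hp : 0 < ‖p‖ := norm_pos_iff.mpr hp0
  have image_exp : symmAnnulus p =
      Complex.exp '' ({u | Real.log ‖p‖ < u.re} ∩ {u | u.re < -Real.log ‖p‖}) := by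
    have exp_mem (u : ℂ) : Complex.exp u ∈ symmAnnulus p ↔
        Real.log ‖p‖ < u.re ∧ u.re < -Real.log ‖p‖ := by
      refine and_congr ?_ ?_
      · rw [Complex.norm_exp, Real.log_lt_iff_lt_exp hp]
      · rw [norm_mul, Complex.norm_exp, ← Real.exp_lt_exp (x := u.re), Real.exp_neg,
          Real.exp_log hp, ← one_div, lt_div_iff₀ hp, mul_comm]
    ext z
    constructor
    · intro hz
      have exp_log : Complex.exp (Complex.log z) = z := Complex.exp_log (symmAnnulus.ne_zero hz)
      exact ⟨Complex.log z, (exp_mem _).mp (exp_log.symm ▸ hz), exp_log⟩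
    · rintro ⟨u, hu, rfl⟩
      exact (exp_mem u).mpr hu
  rw [image_exp]
  exact ((convex_halfSpace_re_gt _).inter (convex_halfSpace_re_lt _)).isPreconnected.image _
    Complex.continuous_exp.continuousOn

/-! ### Liouville's theorem for multiplicatively periodic functions -/

lemma exists_isCompact_translates_cover_symmAnnulus (hp0 : p ≠ 0) (hp1 : ‖p‖ < 1) :
    ∃ C ⊆ symmAnnulus p, IsCompact C ∧ C.Nonempty ∧
      ∀ z ∈ symmAnnulus p, ∃ c ∈ C, z = c ∨ (1 < ‖z‖ ∧ c = p * z) ∨ (1 < ‖c‖ ∧ z = p * c) := by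
  obtain ⟨r, hr0, hr⟩ : ∃ r : ℝ, 0 < r ∧ r * r = ‖p‖ :=
    ⟨√‖p‖, Real.sqrt_pos.mpr (norm_pos_iff.mpr hp0), Real.mul_self_sqrt (norm_nonneg p)⟩
  have hr1 : r < 1 := by nlinarith
  let C : Set ℂ := closedBall 0 r⁻¹ \ ball 0 r
  have mem_C (z : ℂ) : z ∈ C ↔ r ≤ ‖z‖ ∧ ‖z‖ * r ≤ 1 := by
    rw [Set.mem_sdiff, mem_closedBall_zero_iff, mem_ball_zero_iff, not_lt, and_comm, ← one_div,
      le_div_iff₀ hr0]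
  refine ⟨C, fun z hz => ?_, (isCompact_closedBall 0 r⁻¹).diff isOpen_ball,
    ⟨1, (mem_C 1).mpr (by simp [hr1.le])⟩, fun z hz => ?_⟩
  · obtain ⟨h_lower, h_upper⟩ := (mem_C z).mp hz
    refine ⟨by nlinarith, ?_⟩
    rw [norm_mul]
    nlinarith
  · obtain ⟨h_lower, h_upper⟩ := hz
    rw [norm_mul] at h_upper
    rcases lt_or_ge ‖z‖ r with h_small | h_ge
    · have norm_div_mul : ‖z / p‖ * (r * r) = ‖z‖ := by
        rw [hr, ← norm_mul, div_mul_cancel₀ z hp0]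
      have one_lt : 1 < ‖z / p‖ := by nlinarith
      exact ⟨z / p, (mem_C _).mpr ⟨by nlinarith, by nlinarith⟩,
        .inr (.inr ⟨one_lt, (mul_div_cancel₀ z hp0).symm⟩)⟩
    rcases le_or_gt (‖z‖ * r) 1 with h_le | h_large
    · exact ⟨z, (mem_C z).mpr ⟨h_ge, h_le⟩, .inl rfl⟩
    · refine ⟨p * z, (mem_C _).mpr ?_, .inr (.inl ⟨by nlinarith, rfl⟩)⟩
      rw [norm_mul]
      exact ⟨by nlinarith, by nlinarith⟩

lemma exists_isMaxOn_norm_of_mul_periodic {K : ℂ → ℂ} (hp0 : p ≠ 0) (hp1 : ‖p‖ < 1)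
    (hK : ContinuousOn K (symmAnnulus p))
    (hper : ∀ z ∈ symmAnnulus p, 1 < ‖z‖ → K (p * z) = K z) :
    ∃ z₀ ∈ symmAnnulus p, IsMaxOn (norm ∘ K) (symmAnnulus p) z₀ := by
  obtain ⟨C, hC, C_compact, C_nonempty, translate⟩ :=
    exists_isCompact_translates_cover_symmAnnulus hp0 hp1
  obtain ⟨z₀, hz₀, hmax⟩ := C_compact.exists_isMaxOn C_nonempty (hK.mono hC).norm
  refine ⟨z₀, hC hz₀, fun z hz => ?_⟩
  obtain ⟨c, hc, hzc⟩ := translate z hz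
  have K_eq : K z = K c := by
    rcases hzc with rfl | ⟨hz1, rfl⟩ | ⟨hc1, rfl⟩
    · rfl
    · exact (hper z hz hz1).symm
    · exact hper c (hC hc) hc1
  simpa only [Function.comp_apply, mem_ofPred_eq, K_eq] using hmax hc

theorem apply_eq_of_differentiableOn_of_mul_periodic {K : ℂ → ℂ} (hp0 : p ≠ 0) (hp1 : ‖p‖ < 1)
    (hK : DifferentiableOn ℂ K (symmAnnulus p))
    (hper : ∀ z ∈ symmAnnulus p, 1 < ‖z‖ → K (p * z) = K z)
    (hz : z ∈ symmAnnulus p) (hw : w ∈ symmAnnulus p) : K z = K w := by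
  obtain ⟨z₀, hz₀, hmax⟩ := exists_isMaxOn_norm_of_mul_periodic hp0 hp1 hK.continuousOn hper
  have const : EqOn K (Function.const ℂ (K z₀)) (symmAnnulus p) :=
    Complex.eqOn_of_isPreconnected_of_isMaxOn_norm (isPreconnected_symmAnnulus hp0)
      (isOpen_symmAnnulus p) hK hz₀ hmax
  exact (const hz).trans (const hw).symm

lemma deriv_one_eq_of_sq_mul_comp_inv {𝕜 : Type*} [NontriviallyNormedField 𝕜] [CharZero 𝕜]
    {H : 𝕜 → 𝕜} (hH : DifferentiableAt 𝕜 H 1)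
    (hsymm : ∀ᶠ z in 𝓝 1, z ^ 2 * H z⁻¹ = H z) : deriv H 1 = H 1 := by
  have hasDerivAt_inv_one : HasDerivAt (fun z : 𝕜 => z⁻¹) (-1) 1 := by
    simpa using hasDerivAt_inv (one_ne_zero : (1 : 𝕜) ≠ 0)
  have hasDerivAt_comp : HasDerivAt (fun z => H z⁻¹) (deriv H 1 * -1) 1 :=
    HasDerivAt.comp 1 (by simpa using hH.hasDerivAt) hasDerivAt_inv_one
  have hasDerivAt_symm := (hasDerivAt_pow 2 (1 : 𝕜)).fun_mul hasDerivAt_comp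
  have deriv_eq := hH.hasDerivAt.unique (hasDerivAt_symm.congr_of_eventuallyEq (hsymm.mono
    fun _ => Eq.symm))
  norm_num at deriv_eq
  have two_mul_eq : 2 * deriv H 1 = 2 * H 1 := by linear_combination deriv_eq
  exact mul_left_cancel₀ two_ne_zero two_mul_eq

lemma dslope_dslope_eq_div_sq {𝕜 : Type*} [NontriviallyNormedField 𝕜] {H : 𝕜 → 𝕜} {a z : 𝕜}
    (ha : H a = 0) (ha' : deriv H a = 0) (hz : z ≠ a) :
    dslope (dslope H a) a z = H z / (z - a) ^ 2 := by
  rw [dslope_of_ne _ hz, slope_def_field, dslope_same, dslope_of_ne _ hz, slope_def_field, ha, ha',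
    sub_zero, sub_zero, div_div, sq]

/-- Evenness rules out a simple pole at `1`, so a vanishing `(z - 1)⁻²`-coefficient already makes
`1` a removable singularity. -/
theorem apply_eq_of_even_of_mul_periodic {E H : ℂ → ℂ} (hp0 : p ≠ 0) (hp1 : ‖p‖ < 1)
    (hH : DifferentiableOn ℂ H (symmAnnulus p)) (hH1 : H 1 = 0)
    (hEH : ∀ z ∈ symmAnnulus p, z ≠ 1 → H z = (1 - z) ^ 2 * E z)
    (heven : ∀ z ∈ symmAnnulus p, E z⁻¹ = E z)
    (hper : ∀ z ∈ symmAnnulus p, 1 < ‖z‖ → E (p * z) = E z)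
    (hz : z ∈ symmAnnulus p) (hz1 : z ≠ 1) (hw : w ∈ symmAnnulus p) (hw1 : w ≠ 1) :
    E z = E w := by
  have nhds_one : symmAnnulus p ∈ 𝓝 1 :=
    (isOpen_symmAnnulus p).mem_nhds (one_mem_symmAnnulus hp1)
  have symm (z : ℂ) (hz : z ∈ symmAnnulus p) : z ^ 2 * H z⁻¹ = H z := by
    rcases eq_or_ne z 1 with rfl | hz1
    · simp
    · have hz0 := symmAnnulus.ne_zero hz
      rw [hEH z hz hz1, hEH _ (symmAnnulus.inv_mem hz) (inv_ne_one.mpr hz1), heven z hz]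
      field_simp
      ring
  have deriv_zero : deriv H 1 = 0 :=
    (deriv_one_eq_of_sq_mul_comp_inv (hH.differentiableAt nhds_one)
      (eventually_of_mem nhds_one symm)).trans hH1
  let K : ℂ → ℂ := dslope (dslope H 1) 1
  have hK : DifferentiableOn ℂ K (symmAnnulus p) :=
    (Complex.differentiableOn_dslope nhds_one).mpr
      ((Complex.differentiableOn_dslope nhds_one).mpr hH)
  have K_eq (z : ℂ) (hz : z ∈ symmAnnulus p) (hz1 : z ≠ 1) : K z = E z := by
    have hz1' : z - 1 ≠ 0 := sub_ne_zero.mpr hz1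
    rw [show K z = _ from dslope_dslope_eq_div_sq hH1 deriv_zero hz1, hEH z hz hz1,
      div_eq_iff (pow_ne_zero 2 hz1')]
    ring
  have K_periodic (z : ℂ) (hz : z ∈ symmAnnulus p) (hz1 : 1 < ‖z‖) : K (p * z) = K z := by
    have hz1' : z ≠ 1 := by
      rintro rfl
      simp at hz1
    rw [K_eq _ (mul_mem_symmAnnulus hp0 hp1 hz hz1) (ne_one_of_norm_lt_one hz.2),
      K_eq z hz hz1', hper z hz hz1]
  rw [← K_eq z hz hz1, ← K_eq w hw hw1]
  exact apply_eq_of_differentiableOn_of_mul_periodic hp0 hp1 hK K_periodic hz hw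

/-! ### The theta function -/

/-- The theta function `θ(z; p) = (z; p)_∞ (p / z; p)_∞`, which for `0 < ‖p‖ < 1`
vanishes exactly on the powers of `p`. -/
noncomputable def qTheta (p z : ℂ) : ℂ := qPochInf z p * qPochInf (p / z) p

/-- The theta function with its factor `1 - z`, responsible for the zero at `1`, removed. -/
noncomputable def qThetaReg (p z : ℂ) : ℂ := qPochInf (p * z) p * qPochInf (p / z) p

lemma qTheta_eq_one_sub_mul (hp : ‖p‖ < 1) (z : ℂ) : qTheta p z = (1 - z) * qThetaReg p z := by
  rw [qTheta, qPochInf_eq_one_sub_mul hp, mul_assoc, qThetaReg]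

lemma qTheta_one (hp : ‖p‖ < 1) : qTheta p 1 = 0 := by
  rw [qTheta_eq_one_sub_mul hp, sub_self, zero_mul]

lemma qThetaReg_one (p : ℂ) : qThetaReg p 1 = qPochInf p p ^ 2 := by
  rw [qThetaReg, mul_one, div_one, sq]

lemma qTheta_div_left (hp : p ≠ 0) (z : ℂ) : qTheta p (p / z) = qTheta p z := by
  rw [qTheta, div_div_cancel₀ hp, mul_comm, qTheta]

lemma qTheta_inv (hp : ‖p‖ < 1) (hz : z ≠ 0) : qTheta p z⁻¹ = -qTheta p z / z := by
  rw [qTheta_eq_one_sub_mul hp z, qTheta_eq_one_sub_mul hp z⁻¹, qThetaReg, qThetaReg,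
    ← div_eq_mul_inv, div_inv_eq_mul]
  field_simp
  ring

lemma qTheta_mul_left (hp0 : p ≠ 0) (hp1 : ‖p‖ < 1) (hz : z ≠ 0) :
    qTheta p (p * z) = -qTheta p z / z := by
  rw [← div_inv_eq_mul, qTheta_div_left hp0, qTheta_inv hp1 hz]

lemma qThetaReg_ne_zero (hp : ‖p‖ < 1) (hz : z ∈ symmAnnulus p) : qThetaReg p z ≠ 0 :=
  mul_ne_zero (qPochInf_ne_zero hp hz.2) (qPochInf_ne_zero hp (symmAnnulus.norm_div_lt_one hz))

lemma qTheta_ne_zero (hp : ‖p‖ < 1) (hz : z ∈ symmAnnulus p) (hz1 : z ≠ 1) : qTheta p z ≠ 0 := by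
  rw [qTheta_eq_one_sub_mul hp]
  exact mul_ne_zero (sub_ne_zero.mpr hz1.symm) (qThetaReg_ne_zero hp hz)

lemma differentiableAt_qThetaReg (hp : ‖p‖ < 1) (hz : z ≠ 0) :
    DifferentiableAt ℂ (qThetaReg p) z :=
  ((differentiable_qPochInf hp).differentiableAt.comp z (by fun_prop)).mul
    ((differentiable_qPochInf hp).differentiableAt.comp z (by fun_prop (disch := assumption)))

lemma differentiableAt_qTheta (hp : ‖p‖ < 1) (hz : z ≠ 0) : DifferentiableAt ℂ (qTheta p) z := by
  rw [funext (qTheta_eq_one_sub_mul hp)]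
  have := differentiableAt_qThetaReg hp hz
  fun_prop

lemma hasDerivAt_qTheta_one (hp : ‖p‖ < 1) :
    HasDerivAt (qTheta p) (-qPochInf p p ^ 2) 1 := by
  rw [funext (qTheta_eq_one_sub_mul hp)]
  simpa [qThetaReg_one] using ((hasDerivAt_id (1 : ℂ)).const_sub 1).fun_mul
    (differentiableAt_qThetaReg hp one_ne_zero).hasDerivAt

/-- The elliptic function of `z` with a double pole at `1` and zeros at `w` and `w⁻¹` (modulo powers
of `p`). -/
noncomputable def thetaQuotient (p w z : ℂ) : ℂ :=
  qTheta p (z * w) * qTheta p (z / w) / qTheta p z ^ 2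

lemma thetaQuotient_self (hp : ‖p‖ < 1) (hw : w ≠ 0) : thetaQuotient p w w = 0 := by
  rw [thetaQuotient, div_self hw, qTheta_one hp, mul_zero, zero_div]

lemma thetaQuotient_inv (hp : ‖p‖ < 1) (hw : w ≠ 0) (hz : z ≠ 0) :
    thetaQuotient p w z⁻¹ = thetaQuotient p w z := by
  have inv_mul : z⁻¹ * w = (z / w)⁻¹ := by rw [inv_div, mul_comm, div_eq_mul_inv]
  have inv_div : z⁻¹ / w = (z * w)⁻¹ := by rw [mul_inv, div_eq_mul_inv]
  rw [thetaQuotient, inv_mul, inv_div, qTheta_inv hp (mul_ne_zero hz hw),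
    qTheta_inv hp (div_ne_zero hz hw), qTheta_inv hp hz, thetaQuotient]
  field_simp

lemma thetaQuotient_mul_left (hp0 : p ≠ 0) (hp1 : ‖p‖ < 1) (hw : w ≠ 0) (hz : z ≠ 0) :
    thetaQuotient p w (p * z) = thetaQuotient p w z := by
  rw [thetaQuotient, mul_assoc, mul_div_assoc p, qTheta_mul_left hp0 hp1 (mul_ne_zero hz hw),
    qTheta_mul_left hp0 hp1 (div_ne_zero hz hw), qTheta_mul_left hp0 hp1 hz, thetaQuotient]
  field_simp

/-- The function `thetaQuotient` with its double pole at `1` cleared. -/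
noncomputable def thetaQuotientReg (p w z : ℂ) : ℂ :=
  qTheta p (z * w) * qTheta p (z / w) / qThetaReg p z ^ 2

lemma thetaQuotientReg_eq_sq_mul (hp : ‖p‖ < 1) (hz1 : z ≠ 1) :
    thetaQuotientReg p w z = (1 - z) ^ 2 * thetaQuotient p w z := by
  have hz1' : 1 - z ≠ 0 := sub_ne_zero.mpr hz1.symm
  rw [thetaQuotient, qTheta_eq_one_sub_mul hp z, thetaQuotientReg]
  field_simp

lemma thetaQuotientReg_one (hp : ‖p‖ < 1) (hw : w ≠ 0) :
    thetaQuotientReg p w 1 = -qTheta p w ^ 2 / (w * qPochInf p p ^ 4) := by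
  rw [thetaQuotientReg, one_mul, one_div, qTheta_inv hp hw, qThetaReg_one]
  field_simp

lemma differentiableAt_thetaQuotientReg (hp : ‖p‖ < 1) (hw : w ≠ 0) (hz : z ∈ symmAnnulus p) :
    DifferentiableAt ℂ (thetaQuotientReg p w) z := by
  have hz0 := symmAnnulus.ne_zero hz
  exact (((differentiableAt_qTheta hp (mul_ne_zero hz0 hw)).fun_comp' z (by fun_prop)).fun_mul
    ((differentiableAt_qTheta hp (div_ne_zero hz0 hw)).fun_comp' z (by fun_prop))).fun_div
    ((differentiableAt_qThetaReg hp hz0).fun_pow 2) (pow_ne_zero 2 (qThetaReg_ne_zero hp hz))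

lemma hasDerivAt_thetaQuotient_self (hp : ‖p‖ < 1) (hw : w ∈ symmAnnulus p) (hw1 : w ≠ 1) :
    HasDerivAt (thetaQuotient p w)
      (-qPochInf p p ^ 2 * qTheta p (w ^ 2) / (w * qTheta p w ^ 2)) w := by
  have hw0 := symmAnnulus.ne_zero hw
  have hθw := qTheta_ne_zero hp hw hw1
  have hasDerivAt_div : HasDerivAt (fun z => qTheta p (z / w)) (-qPochInf p p ^ 2 * (1 / w)) w :=
    HasDerivAt.comp_of_eq w (hasDerivAt_qTheta_one hp) ((hasDerivAt_id' w).div_const w)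
      (div_self hw0).symm
  have differentiableAt_mul : DifferentiableAt ℂ (fun z => qTheta p (z * w)) w :=
    .fun_comp' (f := fun z => z * w) w (differentiableAt_qTheta hp (mul_ne_zero hw0 hw0))
      (by fun_prop)
  refine ((differentiableAt_mul.hasDerivAt.fun_mul hasDerivAt_div).fun_div
    ((differentiableAt_qTheta hp hw0).fun_pow 2).hasDerivAt
    (pow_ne_zero 2 hθw)).congr_deriv ?_
  rw [div_self hw0, qTheta_one hp, ← sq]
  field_simp
  ring

/-! ### The Koebe function -/

/-- The Koebe function `x / (1 - x) ^ 2`. Its value at the pole `1` is `0`. -/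
noncomputable def koebe (x : ℂ) : ℂ := x / (1 - x) ^ 2

/-- The function `x * koebe' x`, the image of the Koebe function under the Euler operator. -/
noncomputable def eulerKoebe (x : ℂ) : ℂ := (1 + x) * x / (1 - x) ^ 3

lemma koebe_inv (hx : x ≠ 0) : koebe x⁻¹ = koebe x := by
  have one_sub_inv : 1 - x⁻¹ = -(1 - x) / x := by
    field_simp
    ring
  rw [koebe, one_sub_inv, koebe]
  field_simp

lemma eulerKoebe_inv (hx : x ≠ 0) : eulerKoebe x⁻¹ = -eulerKoebe x := by
  have one_sub_inv : 1 - x⁻¹ = -(1 - x) / x := by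
    field_simp
    ring
  rw [eulerKoebe, one_sub_inv, eulerKoebe]
  field_simp
  ring

lemma hasDerivAt_koebe (hx : x ≠ 1) : HasDerivAt koebe ((1 + x) / (1 - x) ^ 3) x := by
  have hx' : 1 - x ≠ 0 := sub_ne_zero.mpr hx.symm
  refine ((hasDerivAt_id' x).fun_div (((hasDerivAt_id' x).const_sub 1).fun_pow 2)
    (pow_ne_zero 2 hx')).congr_deriv ?_
  field_simp
  ring

lemma mul_deriv_koebe (hx : x ≠ 1) : x * deriv koebe x = eulerKoebe x := by
  rw [(hasDerivAt_koebe hx).deriv, eulerKoebe]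
  ring

lemma norm_koebe_le {r : ℝ} (hr : r < 1) (hx : ‖x‖ ≤ r) : ‖koebe x‖ ≤ ‖x‖ / (1 - r) ^ 2 := by
  have one_sub_le : 1 - r ≤ ‖1 - x‖ := by
    have := norm_sub_norm_le 1 x
    rw [norm_one] at this
    linarith
  have := sub_pos.mpr hr
  rw [koebe, norm_div, norm_pow]
  gcongr

/-! ### One-sided sums of the Koebe function -/

/-- The sum of the Koebe function over the forward orbit of `x`, the additive counterpart of
`qPochInf`. -/
noncomputable def koebeSum (p x : ℂ) : ℂ := ∑' n : ℕ, koebe (x * p ^ n)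

lemma norm_koebe_mul_pow_le {r : ℝ} (hp : ‖p‖ < 1) (hr : r < 1) (hx : ‖x‖ ≤ r) (n : ℕ) :
    ‖koebe (x * p ^ n)‖ ≤ ‖p‖ ^ n / (1 - r) ^ 2 := by
  refine (norm_koebe_le hr ((norm_mul_pow_le hp x n).trans hx)).trans ?_
  rw [norm_mul, norm_pow]
  gcongr
  exact mul_le_of_le_one_left (by positivity) (hx.trans hr.le)

lemma summable_norm_pow_div (hp : ‖p‖ < 1) (C : ℝ) : Summable fun n : ℕ => ‖p‖ ^ n / C :=
  (summable_geometric_of_lt_one (norm_nonneg p) hp).div_const C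

lemma summable_koebe_mul_pow (hp : ‖p‖ < 1) (hx : ‖x‖ < 1) :
    Summable fun n : ℕ => koebe (x * p ^ n) :=
  (summable_norm_pow_div hp _).of_norm_bounded (norm_koebe_mul_pow_le hp hx le_rfl)

lemma koebeSum_eq_add (hp : ‖p‖ < 1) (hx : ‖p * x‖ < 1) :
    koebeSum p x = koebe x + koebeSum p (p * x) := by
  have shift (n : ℕ) : x * p ^ (n + 1) = p * x * p ^ n := by ring
  have summable := summable_koebe_mul_pow hp hx
  rw [koebeSum, tsum_eq_zero_add' (by simpa only [shift] using summable)]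
  simp only [shift, pow_zero, mul_one, koebeSum]

lemma hasDerivAt_koebe_mul_pow (hp : ‖p‖ < 1) (hx : ‖x‖ < 1) (n : ℕ) :
    HasDerivAt (fun y => koebe (y * p ^ n)) (deriv koebe (x * p ^ n) * p ^ n) x :=
  .comp (h₂ := koebe) x (hasDerivAt_koebe (mul_pow_ne_one hp hx n)).differentiableAt.hasDerivAt
    (hasDerivAt_mul_const (p ^ n))

lemma differentiableOn_koebe_mul_pow {r : ℝ} (hp : ‖p‖ < 1) (hr : r < 1) (n : ℕ) :
    DifferentiableOn ℂ (fun y => koebe (y * p ^ n)) (ball 0 r) := fun _ hy =>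
  (hasDerivAt_koebe_mul_pow hp ((mem_ball_zero_iff.mp hy).trans
    hr) n).differentiableAt.differentiableWithinAt

lemma differentiableAt_koebeSum (hp : ‖p‖ < 1) (hx : ‖x‖ < 1) :
    DifferentiableAt ℂ (koebeSum p) x := by
  obtain ⟨r, hxr, hr⟩ := exists_between hx
  exact (Complex.differentiableOn_tsum_of_summable_norm (summable_norm_pow_div hp _)
    (differentiableOn_koebe_mul_pow hp hr) isOpen_ball fun n y hy =>
      norm_koebe_mul_pow_le hp hr (mem_ball_zero_iff.mp hy).le n).differentiableAt
    (isOpen_ball.mem_nhds (mem_ball_zero_iff.mpr hxr))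

lemma hasSum_eulerKoebe_mul_pow (hp : ‖p‖ < 1) (hx : ‖x‖ < 1) :
    HasSum (fun n : ℕ => eulerKoebe (x * p ^ n)) (x * deriv (koebeSum p) x) := by
  obtain ⟨r, hxr, hr⟩ := exists_between hx
  have hasSum_deriv := Complex.hasSum_deriv_of_summable_norm (summable_norm_pow_div hp _)
    (differentiableOn_koebe_mul_pow hp hr) isOpen_ball
    (fun n y hy => norm_koebe_mul_pow_le hp hr (mem_ball_zero_iff.mp hy).le n)
    (mem_ball_zero_iff.mpr hxr)
  refine (hasSum_deriv.mul_left x).congr_fun fun n => ?_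
  rw [(hasDerivAt_koebe_mul_pow hp hx n).deriv, ← mul_deriv_koebe (mul_pow_ne_one hp hx n)]
  ring

/-! ### The Weierstrass function -/

/-- The bilateral sum of `koebe (z * p ^ n)` over `n ∈ ℤ`, folded into two one-sided sums by
`koebe_inv`: the terms with `n < 0` form the sum over the forward orbit of `p / z`. -/
noncomputable def qWeierstrass (p z : ℂ) : ℂ := koebeSum p z + koebeSum p (p / z)

/-- The function `qWeierstrass` with its term `koebe z`, responsible for the pole at `1`,
removed. -/
noncomputable def qWeierstrassReg (p z : ℂ) : ℂ := koebeSum p (p * z) + koebeSum p (p / z)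

lemma qWeierstrass_eq_koebe_add (hp : ‖p‖ < 1) (hz : z ∈ symmAnnulus p) :
    qWeierstrass p z = koebe z + qWeierstrassReg p z := by
  rw [qWeierstrass, koebeSum_eq_add hp hz.2, add_assoc, qWeierstrassReg]

lemma qWeierstrass_inv (hp : ‖p‖ < 1) (hz : z ∈ symmAnnulus p) :
    qWeierstrass p z⁻¹ = qWeierstrass p z := by
  rw [qWeierstrass_eq_koebe_add hp hz, qWeierstrass_eq_koebe_add hp (symmAnnulus.inv_mem hz),
    koebe_inv (symmAnnulus.ne_zero hz), qWeierstrassReg, qWeierstrassReg, div_inv_eq_mul,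
    ← div_eq_mul_inv, add_comm (koebeSum p (p / z))]

lemma qWeierstrass_mul_left (hp0 : p ≠ 0) (hp1 : ‖p‖ < 1) (hz : z ∈ symmAnnulus p) :
    qWeierstrass p (p * z) = qWeierstrass p z := by
  rw [← qWeierstrass_inv hp1 hz, qWeierstrass, qWeierstrass, div_inv_eq_mul,
    div_mul_cancel_left₀ hp0, add_comm]

lemma differentiableAt_qWeierstrassReg (hp : ‖p‖ < 1) (hz : z ∈ symmAnnulus p) :
    DifferentiableAt ℂ (qWeierstrassReg p) z := by
  have hz0 := symmAnnulus.ne_zero hz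
  exact ((differentiableAt_koebeSum hp hz.2).comp z (by fun_prop)).add
    ((differentiableAt_koebeSum hp (symmAnnulus.norm_div_lt_one hz)).comp z
      (by fun_prop (disch := assumption)))

lemma mul_deriv_qWeierstrass (hp : ‖p‖ < 1) (hz : z ∈ symmAnnulus p) (hz1 : z ≠ 1) :
    z * deriv (qWeierstrass p) z = eulerKoebe z + p * z * deriv (koebeSum p) (p * z) -
      p / z * deriv (koebeSum p) (p / z) := by
  have hz0 := symmAnnulus.ne_zero hz
  have eventually_eq : qWeierstrass p =ᶠ[𝓝 z]
      fun y => koebe y + (koebeSum p (p * y) + koebeSum p (p / y)) := by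
    filter_upwards [(isOpen_symmAnnulus p).mem_nhds hz] with y hy
    exact qWeierstrass_eq_koebe_add hp hy
  have hasDerivAt_mul : HasDerivAt (fun y => koebeSum p (p * y))
      (deriv (koebeSum p) (p * z) * (p * 1)) z :=
    HasDerivAt.comp z (differentiableAt_koebeSum hp hz.2).hasDerivAt
      ((hasDerivAt_id' z).const_mul p)
  have hasDerivAt_div : HasDerivAt (fun y => koebeSum p (p / y))
      (deriv (koebeSum p) (p / z) * (p * -(z ^ 2)⁻¹)) z :=
    HasDerivAt.comp z
      (differentiableAt_koebeSum hp (symmAnnulus.norm_div_lt_one hz)).hasDerivAt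
      ((hasDerivAt_inv hz0).const_mul p)
  rw [eventually_eq.deriv_eq, ((hasDerivAt_koebe hz1).differentiableAt.hasDerivAt.fun_add
    (hasDerivAt_mul.fun_add hasDerivAt_div)).deriv, ← mul_deriv_koebe hz1]
  field_simp
  ring

lemma hasSum_eulerKoebe_mul_zpow (hp0 : p ≠ 0) (hp1 : ‖p‖ < 1) (hz : z ∈ symmAnnulus p)
    (hz1 : z ≠ 1) :
    HasSum (fun n : ℤ => eulerKoebe (z * p ^ n)) (z * deriv (qWeierstrass p) z) := by
  have hasSum_nat : HasSum (fun n : ℕ => eulerKoebe (z * p ^ n))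
      (eulerKoebe z + p * z * deriv (koebeSum p) (p * z)) := by
    have shift (n : ℕ) : p * z * p ^ n = z * p ^ (n + 1) := by ring
    have hasSum_succ := hasSum_eulerKoebe_mul_pow hp1 hz.2
    simp only [shift] at hasSum_succ
    simpa only [pow_zero, mul_one] using
      HasSum.zero_add (f := fun n : ℕ => eulerKoebe (z * p ^ n)) hasSum_succ
  have hasSum_neg : HasSum (fun n : ℕ => eulerKoebe (z * p ^ (-(n + 1 : ℤ))))
      (-(p / z * deriv (koebeSum p) (p / z))) := by
    refine (hasSum_eulerKoebe_mul_pow hp1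
      (symmAnnulus.norm_div_lt_one hz)).neg.congr_fun fun n => ?_
    have hz0 := symmAnnulus.ne_zero hz
    have reflect : z * p ^ (-(n + 1 : ℤ)) = (p / z * p ^ n)⁻¹ := by
      rw [zpow_neg, zpow_add_one₀ hp0, zpow_natCast]
      field_simp
    rw [reflect, eulerKoebe_inv (mul_ne_zero (div_ne_zero hp0 hz0) (pow_ne_zero n hp0))]
  rw [mul_deriv_qWeierstrass hp1 hz hz1, sub_eq_add_neg]
  exact HasSum.of_nat_of_neg_add_one (by simpa only [zpow_natCast] using hasSum_nat) hasSum_neg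

/-! ### The Weierstrass function in terms of theta functions -/

theorem qWeierstrass_sub (hp0 : p ≠ 0) (hp1 : ‖p‖ < 1) (hz : z ∈ symmAnnulus p) (hz1 : z ≠ 1)
    (hw : w ∈ symmAnnulus p) (hw1 : w ≠ 1) :
    qWeierstrass p z - qWeierstrass p w =
      -w * qPochInf p p ^ 4 / qTheta p w ^ 2 * thetaQuotient p w z := by
  have hw0 := symmAnnulus.ne_zero hw
  have hθw := qTheta_ne_zero hp1 hw hw1
  set c := -w * qPochInf p p ^ 4 / qTheta p w ^ 2 with hc
  let E (z : ℂ) := qWeierstrass p z - qWeierstrass p w - c * thetaQuotient p w z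
  let H (z : ℂ) := z + (1 - z) ^ 2 * (qWeierstrassReg p z - qWeierstrass p w) -
    c * thetaQuotientReg p w z
  have hH : DifferentiableOn ℂ H (symmAnnulus p) := by
    intro z hz
    have := differentiableAt_qWeierstrassReg hp1 hz
    have := differentiableAt_thetaQuotientReg hp1 hw0 hz
    exact DifferentiableAt.differentiableWithinAt (by fun_prop)
  have H_one : H 1 = 0 := by
    have hpp := qPochInf_ne_zero hp1 hp1
    simp only [H, thetaQuotientReg_one hp1 hw0, hc]
    field_simp
    ring
  have H_eq (z : ℂ) (hz : z ∈ symmAnnulus p) (hz1 : z ≠ 1) : H z = (1 - z) ^ 2 * E z := by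
    have hz1' : 1 - z ≠ 0 := sub_ne_zero.mpr hz1.symm
    simp only [H, E, thetaQuotientReg_eq_sq_mul hp1 hz1, qWeierstrass_eq_koebe_add hp1 hz, koebe]
    field_simp
    ring
  have E_even (z : ℂ) (hz : z ∈ symmAnnulus p) : E z⁻¹ = E z := by
    simp only [E, qWeierstrass_inv hp1 hz, thetaQuotient_inv hp1 hw0 (symmAnnulus.ne_zero hz)]
  have E_periodic (z : ℂ) (hz : z ∈ symmAnnulus p) (_ : 1 < ‖z‖) : E (p * z) = E z := by
    simp only [E, qWeierstrass_mul_left hp0 hp1 hz,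
      thetaQuotient_mul_left hp0 hp1 hw0 (symmAnnulus.ne_zero hz)]
  have E_self : E w = 0 := by
    simp only [E, thetaQuotient_self hp1 hw0, sub_self, mul_zero]
  exact sub_eq_zero.mp ((apply_eq_of_even_of_mul_periodic hp0 hp1 hH H_one H_eq E_even E_periodic
    hz hz1 hw hw1).trans E_self)

lemma mul_deriv_qWeierstrass_eq_qTheta (hp0 : p ≠ 0) (hp1 : ‖p‖ < 1) (hz : z ∈ symmAnnulus p)
    (hz1 : z ≠ 1) :
    z * deriv (qWeierstrass p) z = z * qPochInf p p ^ 6 * qTheta p (z ^ 2) / qTheta p z ^ 4 := by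
  have hz0 := symmAnnulus.ne_zero hz
  have eventually_eq : qWeierstrass p =ᶠ[𝓝 z] fun y => qWeierstrass p z +
      -z * qPochInf p p ^ 4 / qTheta p z ^ 2 * thetaQuotient p z y := by
    filter_upwards [(isOpen_symmAnnulus p).mem_nhds hz, isOpen_ne.mem_nhds hz1] with y hy hy1
    exact sub_eq_iff_eq_add'.mp (qWeierstrass_sub hp0 hp1 hy hy1 hz hz1)
  rw [eventually_eq.deriv_eq, (((hasDerivAt_thetaQuotient_self hp1 hz hz1).const_mul
    _).const_add _).deriv]
  field_simp

theorem hasSum_eulerKoebe_mul_zpow_eq_qTheta (hp0 : p ≠ 0) (hp1 : ‖p‖ < 1)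
    (hz : z ∈ symmAnnulus p) (hz1 : z ≠ 1) :
    HasSum (fun n : ℤ => eulerKoebe (z * p ^ n))
      (z * qPochInf p p ^ 6 * qTheta p (z ^ 2) / qTheta p z ^ 4) :=
  mul_deriv_qWeierstrass_eq_qTheta hp0 hp1 hz hz1 ▸ hasSum_eulerKoebe_mul_zpow hp0 hp1 hz hz1

/-- For 0 < |q| < 1, the bilateral series ∑_{n∈ℤ} (1 + q^{3n+1})·q^{3n+1}/(1 − q^{3n+1})³
converges and equals q·(q³;q³)⁶_∞ / ((q;q³)³_∞ (q²;q³)³_∞). -/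
theorem bilateral_sum_B3 (q : ℂ) (h0 : 0 < ‖q‖) (h1 : ‖q‖ < 1) :
    Summable (fun n : ℤ =>
      (1 + q ^ (3 * n + 1)) * q ^ (3 * n + 1) / (1 - q ^ (3 * n + 1)) ^ 3) ∧
    ∑' n : ℤ, (1 + q ^ (3 * n + 1)) * q ^ (3 * n + 1) / (1 - q ^ (3 * n + 1)) ^ 3 =
      q * qPochInf (q ^ 3) (q ^ 3) ^ 6 /
        (qPochInf q (q ^ 3) ^ 3 * qPochInf (q ^ 2) (q ^ 3) ^ 3) := by
  have hq : q ≠ 0 := norm_pos_iff.mp h0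
  have hq1 : q ≠ 1 := ne_one_of_norm_lt_one h1
  have hp1 : ‖q ^ 3‖ < 1 := by
    rw [norm_pow]
    exact pow_lt_one₀ h0.le h1 three_ne_zero
  have q_mem : q ∈ symmAnnulus (q ^ 3) := mem_symmAnnulus_pow hq h1 (by norm_num)
  have cube_div_self : q ^ 3 / q = q ^ 2 := by field_simp
  have theta_ne_zero : qTheta (q ^ 3) q ≠ 0 := qTheta_ne_zero hp1 q_mem hq1
  have theta_eq : qTheta (q ^ 3) q = qPochInf q (q ^ 3) * qPochInf (q ^ 2) (q ^ 3) := by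
    rw [qTheta, cube_div_self]
  have theta_sq : qTheta (q ^ 3) (q ^ 2) = qTheta (q ^ 3) q := by
    rw [← cube_div_self, qTheta_div_left (pow_ne_zero 3 hq)]
  have zpow_eq (n : ℤ) : q * (q ^ 3) ^ n = q ^ (3 * n + 1) := by
    rw [zpow_add_one₀ hq, zpow_mul, mul_comm, zpow_ofNat]
  have hasSum := hasSum_eulerKoebe_mul_zpow_eq_qTheta (pow_ne_zero 3 hq) hp1 q_mem hq1
  simp only [zpow_eq, eulerKoebe] at hasSum
  refine ⟨hasSum.summable, hasSum.tsum_eq.trans ?_⟩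
  rw [theta_sq, ← mul_pow, ← theta_eq]
  field_simp
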